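/- arXiv:1608.06454 — 2 statements merged into one kernel-verified Lean document; each statement's English description precedes it below -/
import Mathlib

section
/- Watson's classical summation theorem for a terminating hypergeometric 3F2-series of even order: for every natural number n and all complex numbers a and c such that none of the denominator parameters produces a vanishing factor (i.e. (a+1)/2 + k ≠ 0 and 2c + k ≠ 0 for all integers k with 0 ≤ k ≤ 2n-1, and (1-a)/2 - n + k ≠ 0 and 1/2 + c + k ≠ 0 for all integers k with 0 ≤ k ≤ n-1), one has ∑_{k=0}^{2n} [(-2n)_k (a+2n)_k (c)_k] / [((a+1)/2)_k (2c)_k k!] = [(1/2)_n (c + (1-a)/2 - n)_n] / [((1-a)/2 - n)_n (c + 1/2)_n], where (x)_k = x(x+1)⋯(x+k-1) denotes the rising factorial (Pochhammer symbol). -/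
open Finset

/-- The Pochhammer symbol (rising factorial) `(x)_k = x(x+1)⋯(x+k-1)` for a complex
number `x`, with `(x)_0 = 1`. -/
noncomputable def poch (x : ℂ) (k : ℕ) : ℂ := (ascPochhammer ℂ k).eval x

/-!
Write `F(α, β)` for the series `₃F₂(α, β, c; (α + β + 1)/2, 2c; 1)`. Moving `(α + 2, β)` to
`(α, β + 2)` leaves the denominator parameters alone, and Gosper summation shows that
`(β + 1)(2c - α - 1) F(α, β + 2) - (α + 1)(2c - β - 1) F(α + 2, β)` telescopes: its partial sums
are multiples of the terms of `₃F₂(α + 1, β + 1, c + 1; (α + β + 3)/2, 2c; 1)`. For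
`α = -2n - 2` these terms vanish beyond `k = 2n + 1`, so `F(-2n - 2, a + 2n + 2)` is an explicit
multiple of `F(-2n, a + 2n)`, and the sum follows by induction on `n`.
-/

section Pochhammer

lemma ascPochhammer_succ_eval_left {R : Type*} [CommSemiring R] (k : ℕ) (x : R) :
    (ascPochhammer R (k + 1)).eval x = x * (ascPochhammer R k).eval (x + 1) := by
  simp [ascPochhammer_succ_left, Polynomial.eval_comp]

lemma ascPochhammer_eval_sub_natCast {R : Type*} [CommRing R] (n : ℕ) (x : R) :
    (ascPochhammer R n).eval (x - n) = (-1) ^ n * (ascPochhammer R n).eval (1 - x) := by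
  rw [← neg_sub x 1, ascPochhammer_eval_neg_eq_descPochhammer,
    descPochhammer_eval_eq_ascPochhammer, ← mul_assoc, ← mul_pow]
  ring_nf

end Pochhammer

section Hypergeometric

variable {K : Type*} [Field K]

/-- The `k`-th term `(α)_k (β)_k (γ)_k / ((δ)_k (ε)_k k!)` of the hypergeometric series
`₃F₂(α, β, γ; δ, ε; 1)`. -/
noncomputable def hypergeometricTerm (α β γ δ ε : K) (k : ℕ) : K :=
  ((ascPochhammer K k).eval α * (ascPochhammer K k).eval β * (ascPochhammer K k).eval γ) /
    ((ascPochhammer K k).eval δ * (ascPochhammer K k).eval ε * (k.factorial : K))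

@[simp]
lemma hypergeometricTerm_zero (α β γ δ ε : K) : hypergeometricTerm α β γ δ ε 0 = 1 := by
  simp [hypergeometricTerm]

lemma hypergeometricTerm_comm (α β γ δ ε : K) (k : ℕ) :
    hypergeometricTerm α β γ δ ε k = hypergeometricTerm β α γ δ ε k := by
  simp only [hypergeometricTerm, mul_comm ((ascPochhammer K k).eval α)]

lemma hypergeometricTerm_eq_zero_of_lt {m k : ℕ} (h : m < k) (β γ δ ε : K) :
    hypergeometricTerm (-(m : K)) β γ δ ε k = 0 := by
  simp [hypergeometricTerm, ascPochhammer_eval_neg_coe_nat_of_lt h]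

lemma sum_range_hypergeometricTerm_of_le {m N : ℕ} (h : m ≤ N) (β γ δ ε : K) :
    ∑ k ∈ range (N + 1), hypergeometricTerm (-(m : K)) β γ δ ε k =
      ∑ k ∈ range (m + 1), hypergeometricTerm (-(m : K)) β γ δ ε k := by
  refine (sum_subset (range_mono (by omega)) fun k _ hk ↦ ?_).symm
  exact hypergeometricTerm_eq_zero_of_lt (by simpa using hk) β γ δ ε

variable [CharZero K]

lemma mul_div_hypergeometric_denominator_succ (x δ ε : K) (k : ℕ) (hδ : δ + k ≠ 0)
    (hε : ε + k ≠ 0) :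
    (δ + k) * (ε + k) * (k + 1) * (x / ((ascPochhammer K (k + 1)).eval δ *
        (ascPochhammer K (k + 1)).eval ε * ((k + 1).factorial : K))) =
      x / ((ascPochhammer K k).eval δ * (ascPochhammer K k).eval ε * (k.factorial : K)) := by
  have denominator_succ : (ascPochhammer K (k + 1)).eval δ * (ascPochhammer K (k + 1)).eval ε *
      ((k + 1).factorial : K) = (δ + k) * (ε + k) * (k + 1) *
        ((ascPochhammer K k).eval δ * (ascPochhammer K k).eval ε * (k.factorial : K)) := by
    rw [ascPochhammer_succ_eval, ascPochhammer_succ_eval, Nat.factorial_succ, Nat.cast_mul,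
      Nat.cast_succ]
    ring
  rw [denominator_succ, ← mul_div_assoc, mul_div_mul_left _ _
    (mul_ne_zero (mul_ne_zero hδ hε) (Nat.cast_add_one_ne_zero k))]

lemma hypergeometricTerm_succ (α β γ δ ε : K) (k : ℕ) (hδ : δ + k ≠ 0) (hε : ε + k ≠ 0) :
    (δ + k) * (ε + k) * (k + 1) * hypergeometricTerm α β γ δ ε (k + 1) =
      (α + k) * (β + k) * (γ + k) * hypergeometricTerm α β γ δ ε k := by
  rw [hypergeometricTerm, mul_div_hypergeometric_denominator_succ _ _ _ _ hδ hε,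
    hypergeometricTerm, ascPochhammer_succ_eval, ascPochhammer_succ_eval, ascPochhammer_succ_eval]
  ring

lemma hypergeometricTerm_add_two_succ (α β γ δ ε : K) (k : ℕ) (hδ : δ + k ≠ 0)
    (hε : ε + k ≠ 0) :
    (δ + k) * (ε + k) * (k + 1) * ((β + 1) * hypergeometricTerm α (β + 2) γ δ ε (k + 1)) =
      α * γ * (β + 1 + k) * (β + 2 + k) *
        hypergeometricTerm (α + 1) (β + 1) (γ + 1) δ ε k := by
  have shift_two : (β + 1) * (ascPochhammer K (k + 1)).eval (β + 2) =
      (ascPochhammer K k).eval (β + 1) * (β + 1 + k) * (β + 2 + k) := by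
    rw [show β + 2 = β + 1 + 1 by ring, ← ascPochhammer_succ_eval_left, ascPochhammer_succ_eval,
      ascPochhammer_succ_eval]
    push_cast
    ring
  rw [mul_left_comm, hypergeometricTerm, mul_div_hypergeometric_denominator_succ _ _ _ _ hδ hε,
    hypergeometricTerm, ascPochhammer_succ_eval_left k α, ascPochhammer_succ_eval_left k γ]
  linear_combination α * γ * (ascPochhammer K k).eval (α + 1) *
    (ascPochhammer K k).eval (γ + 1) / ((ascPochhammer K k).eval δ *
      (ascPochhammer K k).eval ε * (k.factorial : K)) * shift_two

lemma hypergeometricTerm_contiguous_succ (α β c : K) (k : ℕ)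
    (hδ : (α + β + 3) / 2 + k ≠ 0) (hε : 2 * c + k ≠ 0) :
    (β + 1) * (2 * c - α - 1) *
        hypergeometricTerm α (β + 2) c ((α + β + 3) / 2) (2 * c) (k + 1) -
      (α + 1) * (2 * c - β - 1) *
        hypergeometricTerm (α + 2) β c ((α + β + 3) / 2) (2 * c) (k + 1) =
    2 * (β - α) * c *
      (hypergeometricTerm (α + 1) (β + 1) (c + 1) ((α + β + 3) / 2) (2 * c) (k + 1) -
        hypergeometricTerm (α + 1) (β + 1) (c + 1) ((α + β + 3) / 2) (2 * c) k) := by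
  have raise_β := hypergeometricTerm_add_two_succ α β c _ _ k hδ hε
  have raise_α := hypergeometricTerm_add_two_succ β α c _ _ k hδ hε
  rw [hypergeometricTerm_comm β, hypergeometricTerm_comm (β + 1)] at raise_α
  have raise_all := hypergeometricTerm_succ (α + 1) (β + 1) (c + 1) _ _ k hδ hε
  refine mul_left_cancel₀ (mul_ne_zero (mul_ne_zero hδ hε) (Nat.cast_add_one_ne_zero k)) ?_
  linear_combination (2 * c - α - 1) * raise_β - (2 * c - β - 1) * raise_α -
    2 * (β - α) * c * raise_all

lemma sum_hypergeometricTerm_contiguous (α β c : K) (N : ℕ)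
    (hδ : ∀ k < N, (α + β + 3) / 2 + k ≠ 0) (hε : ∀ k < N, 2 * c + k ≠ 0) :
    (β + 1) * (2 * c - α - 1) *
        ∑ k ∈ range (N + 1), hypergeometricTerm α (β + 2) c ((α + β + 3) / 2) (2 * c) k -
      (α + 1) * (2 * c - β - 1) *
        ∑ k ∈ range (N + 1), hypergeometricTerm (α + 2) β c ((α + β + 3) / 2) (2 * c) k =
    2 * (β - α) * c *
      hypergeometricTerm (α + 1) (β + 1) (c + 1) ((α + β + 3) / 2) (2 * c) N := by
  induction N with
  | zero => simp only [zero_add, sum_range_one, hypergeometricTerm_zero]; ring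
  | succ N ih =>
    rw [sum_range_succ _ (N + 1), sum_range_succ _ (N + 1)]
    linear_combination ih (fun k hk ↦ hδ k (by omega)) (fun k hk ↦ hε k (by omega)) +
      hypergeometricTerm_contiguous_succ α β c N (hδ N (by omega)) (hε N (by omega))

lemma sum_hypergeometricTerm_watson_succ (n : ℕ) (a c : K)
    (hδ : ∀ k < 2 * (n + 1), (a + 1) / 2 + k ≠ 0) (hε : ∀ k < 2 * (n + 1), 2 * c + k ≠ 0) :
    ((a + 1) / 2 + n) * (c + 1 / 2 + n) *
        ∑ k ∈ range (2 * (n + 1) + 1), hypergeometricTerm (-((2 * (n + 1) : ℕ) : K))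
          (a + (2 * (n + 1) : ℕ)) c ((a + 1) / 2) (2 * c) k =
      (1 / 2 + n) * ((a + 1) / 2 - c + n) *
        ∑ k ∈ range (2 * n + 1), hypergeometricTerm (-((2 * n : ℕ) : K))
          (a + (2 * n : ℕ)) c ((a + 1) / 2) (2 * c) k := by
  have hδ_eq : (-((2 * (n + 1) : ℕ) : K) + (a + (2 * n : ℕ)) + 3) / 2 = (a + 1) / 2 := by
    push_cast; ring
  have contiguous := sum_hypergeometricTerm_contiguous (-((2 * (n + 1) : ℕ) : K))
    (a + (2 * n : ℕ)) c (2 * (n + 1)) (by rwa [hδ_eq]) hε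
  rw [hδ_eq,
    show a + ((2 * n : ℕ) : K) + 2 = a + (2 * (n + 1) : ℕ) by push_cast; ring,
    show -((2 * (n + 1) : ℕ) : K) + 2 = -(2 * n : ℕ) by push_cast; ring,
    show -((2 * (n + 1) : ℕ) : K) + 1 = -(2 * n + 1 : ℕ) by push_cast; ring,
    hypergeometricTerm_eq_zero_of_lt (by omega),
    sum_range_hypergeometricTerm_of_le (m := 2 * n) (by omega)] at contiguous
  push_cast at contiguous ⊢
  linear_combination contiguous / 4

lemma sum_hypergeometricTerm_watson (n : ℕ) (a c : K) (hδ : ∀ k < 2 * n, (a + 1) / 2 + k ≠ 0)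
    (hε : ∀ k < 2 * n, 2 * c + k ≠ 0) :
    ∑ k ∈ range (2 * n + 1), hypergeometricTerm (-((2 * n : ℕ) : K))
        (a + (2 * n : ℕ)) c ((a + 1) / 2) (2 * c) k =
      ((ascPochhammer K n).eval (1 / 2) * (ascPochhammer K n).eval ((a + 1) / 2 - c)) /
        ((ascPochhammer K n).eval ((a + 1) / 2) * (ascPochhammer K n).eval (c + 1 / 2)) := by
  induction n with
  | zero => simp
  | succ n ih =>
    have hδn : (a + 1) / 2 + n ≠ 0 := hδ n (by omega)
    have hεn : c + 1 / 2 + n ≠ 0 := by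
      intro h
      apply hε (2 * n + 1) (by omega)
      push_cast
      linear_combination 2 * h
    have recurrence := sum_hypergeometricTerm_watson_succ n a c hδ hε
    rw [ih (fun k hk ↦ hδ k (by omega)) (fun k hk ↦ hε k (by omega))] at recurrence
    simp only [ascPochhammer_succ_eval]
    rw [mul_mul_mul_comm, mul_mul_mul_comm _ ((a + 1) / 2 + (n : K)), mul_div_mul_comm,
      ← mul_div_assoc, eq_div_iff (mul_ne_zero hδn hεn)]
    linear_combination recurrence

theorem watson_even_general (n : ℕ) (a c : K)
    (h₁ : ∀ k : ℕ, k < 2 * n → (a + 1) / 2 + k ≠ 0)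
    (h₂ : ∀ k : ℕ, k < 2 * n → 2 * c + k ≠ 0) :
    ∑ k ∈ range (2 * n + 1),
        hypergeometricTerm (-(2 * n : K)) (a + 2 * n) c ((a + 1) / 2) (2 * c) k =
      ((ascPochhammer K n).eval (1 / 2) * (ascPochhammer K n).eval (c + (1 - a) / 2 - n)) /
        ((ascPochhammer K n).eval ((1 - a) / 2 - n) * (ascPochhammer K n).eval (c + 1 / 2)) := by
  have reflected := sum_hypergeometricTerm_watson n a c h₁ h₂
  push_cast at reflected
  rw [reflected, ascPochhammer_eval_sub_natCast, ascPochhammer_eval_sub_natCast,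
    show 1 - (c + (1 - a) / 2) = (a + 1) / 2 - c by ring,
    show 1 - (1 - a) / 2 = (a + 1) / 2 by ring, mul_left_comm, mul_assoc ((-1 : K) ^ n),
    mul_div_mul_left _ _ (pow_ne_zero n (neg_ne_zero.mpr one_ne_zero))]

end Hypergeometric

/-- **Watson's classical summation theorem** for a terminating hypergeometric
`₃F₂`-series of even order. -/
theorem watson_even (n : ℕ) (a c : ℂ)
    (h₁ : ∀ k : ℕ, k < 2 * n → (a + 1) / 2 + k ≠ 0)
    (h₂ : ∀ k : ℕ, k < 2 * n → 2 * c + k ≠ 0)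
    (h₃ : ∀ k : ℕ, k < n → (1 - a) / 2 - n + k ≠ 0)
    (h₄ : ∀ k : ℕ, k < n → 1 / 2 + c + k ≠ 0) :
    ∑ k ∈ Finset.range (2 * n + 1),
      (poch (-(2 * n : ℂ)) k * poch (a + 2 * n) k * poch c k) /
        (poch ((a + 1) / 2) k * poch (2 * c) k * (Nat.factorial k : ℂ)) =
      (poch (1 / 2) n * poch (c + (1 - a) / 2 - n) n) /
        (poch ((1 - a) / 2 - n) n * poch (c + 1 / 2) n) :=
  watson_even_general n a c h₁ h₂
end

section
/- Watson's classical summation theorem for a terminating hypergeometric 3F2-series of odd order: for every natural number n and all complex numbers a and c such that (a+1)/2 + k ≠ 0 and 2c + k ≠ 0 for all integers k with 0 ≤ k ≤ 2n, one has ∑_{k=0}^{2n+1} [(-2n-1)_k (a+2n+1)_k (c)_k] / [((a+1)/2)_k (2c)_k k!] = 0, where (x)_k = x(x+1)⋯(x+k-1) denotes the rising factorial (Pochhammer symbol). -/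
/-!
Up to its sign `(-1)ⁿ`, the binomial transform `T f n = ∑ₖ (-1)ᵏ (n choose k) f k` is an iterated
finite difference, and by Chu–Vandermonde `T` sends `k ↦ (x)ₖ / (y)ₖ` to `k ↦ (y - x)ₖ / (y)ₖ`.
With `b = (a + 1) / 2` and `N = 2n + 1`, Watson's series is `T (f * g) N` for
`f k = (2b + N - 1)ₖ / (b)ₖ` and `g k = (c)ₖ / (2c)ₖ`. Since `T g = g`, the series equals
`T (f * T g) N = ∑ⱼ (N choose j) g j * T (f (j + ·)) (N - j)`. The parameters of `f` are such that
`T (f (j + ·)) (N - j) = (-1)ᴺ⁻ʲ f j`, so the right-hand side is `(-1)ᴺ T (f * g) N`, and the series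
vanishes because `N` is odd.
-/

open Finset

theorem neg_one_pow_add_mul_neg_one_pow {M : Type*} [Monoid M] [HasDistribNeg M] (m n : ℕ) :
    (-1 : M) ^ (m + n) * (-1) ^ m = (-1) ^ n := by
  rw [← pow_add, add_comm m n, add_assoc, pow_add, Even.neg_one_pow ⟨m, rfl⟩, mul_one]

section BinomialTransform

/-- The involutive binomial transform `n ↦ ∑ₖ (-1)ᵏ (n choose k) f k` of a sequence, that is,
`(-1)ⁿ` times the `n`-th forward difference of `f` at `0`. -/
def binomialTransform {R : Type*} [Ring R] (f : ℕ → R) (n : ℕ) : R :=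
  ∑ k ∈ range (n + 1), (-1) ^ k * n.choose k * f k

theorem binomialTransform_congr {R : Type*} [Ring R] {f g : ℕ → R} {n : ℕ}
    (h : ∀ k ≤ n, f k = g k) :
    binomialTransform f n = binomialTransform g n :=
  sum_congr rfl fun k hk => by rw [h k (mem_range_succ_iff.mp hk)]

variable {R : Type*} [CommRing R]

theorem binomialTransform_const_mul (r : R) (f : ℕ → R) (n : ℕ) :
    binomialTransform (fun k => r * f k) n = r * binomialTransform f n := by
  simp only [binomialTransform, mul_sum, mul_left_comm]

/-- After interchanging the sums, `C(n,k) C(k,j) = C(n,j) C(n-j,k-j)` turns the inner ones into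
binomial transforms of shifts of `f`. -/
theorem binomialTransform_mul_binomialTransform (f g : ℕ → R) (n : ℕ) :
    binomialTransform (f * binomialTransform g) n =
      ∑ j ∈ range (n + 1), n.choose j * g j * binomialTransform (fun i => f (j + i)) (n - j) := by
  simp only [binomialTransform, Pi.mul_apply, mul_sum]
  rw [sum_comm' (t' := range (n + 1)) (s' := fun j => Ico j (n + 1)) (by grind)]
  refine sum_congr rfl fun j hj => ?_
  rw [sum_Ico_eq_sum_range, Nat.sub_add_comm (mem_range_succ_iff.mp hj)]
  refine sum_congr rfl fun i _ => ?_
  have trinomial : (n.choose (j + i) : R) * (j + i).choose j = n.choose j * (n - j).choose i := by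
    have h := Nat.choose_mul (n := n) (Nat.le_add_right j i)
    rw [Nat.add_sub_cancel_left] at h
    exact_mod_cast congrArg (Nat.cast (R := R)) h
  linear_combination ((-1) ^ (j + i) * (-1) ^ j * f (j + i) * g j) * trinomial +
    (n.choose j * (n - j).choose i * f (j + i) * g j) *
      neg_one_pow_add_mul_neg_one_pow (M := R) j i

end BinomialTransform

section AscPochhammer

variable {R : Type*} [Ring R]

theorem ascPochhammer_eval_one_sub_sub (x : R) (n : ℕ) :
    (ascPochhammer R n).eval (1 - x - n) = (-1) ^ n * (ascPochhammer R n).eval x := by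
  calc (ascPochhammer R n).eval (1 - x - n) = (descPochhammer R n).eval (-x) := by
        rw [descPochhammer_eval_eq_ascPochhammer, show -x - n + 1 = 1 - x - n by abel]
    _ = (-1) ^ n * ((-1) ^ n * (descPochhammer R n).eval (-x)) := by
        rw [← mul_assoc, ← pow_add, Even.neg_one_pow ⟨n, rfl⟩, one_mul]
    _ = (-1) ^ n * (ascPochhammer R n).eval x := by
        rw [← ascPochhammer_eval_neg_eq_descPochhammer, neg_neg]

theorem ascPochhammer_eval_neg_natCast (n k : ℕ) :
    (ascPochhammer R k).eval (-(n : R)) = (-1) ^ k * n.choose k * k.factorial := by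
  rw [ascPochhammer_eval_neg_eq_descPochhammer, descPochhammer_eval_eq_descFactorial,
    Nat.descFactorial_eq_factorial_mul_choose, mul_comm k.factorial, Nat.cast_mul, mul_assoc]

theorem ascPochhammer_eval_ne_zero [IsDomain R] {x : R} {n : ℕ} (h : ∀ k < n, x + k ≠ 0) :
    (ascPochhammer R n).eval x ≠ 0 := by
  rw [Ne, ascPochhammer_eval_eq_zero_iff]
  rintro ⟨k, hk, hkx⟩
  exact h k hk (by rw [hkx, add_neg_cancel])

theorem ascPochhammer_eval_add {S : Type*} [CommSemiring S] (x : S) (m n : ℕ) :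
    (ascPochhammer S (m + n)).eval x =
      (ascPochhammer S m).eval x * (ascPochhammer S n).eval (x + m) := by
  simp [← ascPochhammer_mul]

/-- The Chu–Vandermonde identity for falling factorials, at `-x` and `y + n - 1`. -/
theorem ascPochhammer_eval_sub {R : Type*} [CommRing R] (x y : R) (n : ℕ) :
    (ascPochhammer R n).eval (y - x) = ∑ k ∈ range (n + 1),
      (-1) ^ k * n.choose k *
        ((ascPochhammer R k).eval x * (ascPochhammer R (n - k)).eval (y + k)) := by
  have vandermonde := Ring.descPochhammer_smeval_add n (Commute.all (-x) (y + n - 1))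
  simp only [Polynomial.descPochhammer_smeval_eq_ascPochhammer,
    Polynomial.ascPochhammer_smeval_eq_eval,
    Finset.Nat.sum_antidiagonal_eq_sum_range_succ_mk] at vandermonde
  rw [show y - x = -x + (y + n - 1) - n + 1 by ring, vandermonde]
  refine sum_congr rfl fun k hk => ?_
  rw [Nat.cast_sub (mem_range_succ_iff.mp hk), show -x - (k : R) + 1 = 1 - x - k by ring,
    ascPochhammer_eval_one_sub_sub, show y + n - 1 - ((n : R) - k) + 1 = y + k by ring]
  ring

end AscPochhammer

section AscPochhammerRatio

variable {K : Type*} [Field K]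

/-- The sequence of quotients `(x)ₖ / (y)ₖ` of rising factorials, from which the terms of
hypergeometric series are built, with the value `0` where `(y)ₖ = 0`. -/
noncomputable def ascPochhammerRatio (x y : K) (k : ℕ) : K :=
  (ascPochhammer K k).eval x / (ascPochhammer K k).eval y

theorem ascPochhammerRatio_add (x y : K) (m n : ℕ) :
    ascPochhammerRatio x y (m + n) =
      ascPochhammerRatio x y m * ascPochhammerRatio (x + m) (y + m) n := by
  simp only [ascPochhammerRatio, ascPochhammer_eval_add, mul_div_mul_comm]

theorem binomialTransform_ascPochhammerRatio (x : K) {y : K} {n : ℕ}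
    (hy : (ascPochhammer K n).eval y ≠ 0) :
    binomialTransform (ascPochhammerRatio x y) n = ascPochhammerRatio (y - x) y n := by
  rw [ascPochhammerRatio, ascPochhammer_eval_sub, sum_div]
  refine sum_congr rfl fun k hk => ?_
  obtain ⟨m, rfl⟩ := Nat.exists_eq_add_of_le (mem_range_succ_iff.mp hk)
  rw [ascPochhammer_eval_add] at hy ⊢
  rw [Nat.add_sub_cancel_left, mul_div_assoc, mul_div_mul_right _ _ (right_ne_zero_of_mul hy),
    ascPochhammerRatio]

theorem ascPochhammerRatio_one_sub_sub {y : K} {n : ℕ} (hy : (ascPochhammer K n).eval y ≠ 0) :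
    ascPochhammerRatio (1 - y - n) y n = (-1) ^ n := by
  rw [ascPochhammerRatio, ascPochhammer_eval_one_sub_sub, mul_div_cancel_right₀ _ hy]

theorem binomialTransform_ascPochhammerRatio_shift {y : K} {m n : ℕ}
    (hy : (ascPochhammer K (m + n)).eval y ≠ 0) :
    binomialTransform (fun k => ascPochhammerRatio (2 * y + (m + n : ℕ) - 1) y (m + k)) n =
      (-1) ^ n * ascPochhammerRatio (2 * y + (m + n : ℕ) - 1) y m := by
  rw [ascPochhammer_eval_add] at hy
  have hym := right_ne_zero_of_mul hy
  simp only [ascPochhammerRatio_add _ _ m]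
  rw [binomialTransform_const_mul, binomialTransform_ascPochhammerRatio _ hym,
    show y + m - (2 * y + (m + n : ℕ) - 1 + m) = 1 - (y + m) - n by push_cast; ring,
    ascPochhammerRatio_one_sub_sub hym, mul_comm]

theorem binomialTransform_ascPochhammerRatio_mul_of_eq_self {y : K} {g : ℕ → K} {n : ℕ}
    (hy : (ascPochhammer K n).eval y ≠ 0) (hg : ∀ k ≤ n, binomialTransform g k = g k) :
    binomialTransform (ascPochhammerRatio (2 * y + n - 1) y * g) n =
      (-1) ^ n * binomialTransform (ascPochhammerRatio (2 * y + n - 1) y * g) n := by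
  set f := ascPochhammerRatio (2 * y + n - 1) y with hf
  calc binomialTransform (f * g) n = binomialTransform (f * binomialTransform g) n :=
        binomialTransform_congr fun k hk => by simp only [Pi.mul_apply, hg k hk]
    _ = ∑ j ∈ range (n + 1), n.choose j * g j * binomialTransform (fun i => f (j + i)) (n - j) :=
        binomialTransform_mul_binomialTransform f g n
    _ = (-1) ^ n * binomialTransform (f * g) n := by
        rw [binomialTransform, mul_sum]
        refine sum_congr rfl fun j hj => ?_
        obtain ⟨m, rfl⟩ := Nat.exists_eq_add_of_le (mem_range_succ_iff.mp hj)
        rw [Nat.add_sub_cancel_left, hf, binomialTransform_ascPochhammerRatio_shift hy,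
          ← neg_one_pow_add_mul_neg_one_pow j m, Pi.mul_apply]
        ring

theorem sum_ascPochhammer_eq_binomialTransform {n : ℕ} (hn : (n.factorial : K) ≠ 0) (x y c d : K) :
    ∑ k ∈ range (n + 1),
      ((ascPochhammer K k).eval (-(n : K)) * (ascPochhammer K k).eval x *
          (ascPochhammer K k).eval c) /
        ((ascPochhammer K k).eval y * (ascPochhammer K k).eval d * (k.factorial : K)) =
      binomialTransform (ascPochhammerRatio x y * ascPochhammerRatio c d) n := by
  refine sum_congr rfl fun k hk => ?_
  have hk₀ : (k.factorial : K) ≠ 0 := fun h => hn <| by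
    obtain ⟨m, hm⟩ := Nat.factorial_dvd_factorial (mem_range_succ_iff.mp hk)
    rw [hm, Nat.cast_mul, h, zero_mul]
  rw [ascPochhammer_eval_neg_natCast, mul_right_comm _ (k.factorial : K),
    mul_right_comm _ (k.factorial : K), mul_div_mul_right _ _ hk₀, mul_assoc, mul_div_assoc,
    mul_div_mul_comm]
  rfl

theorem watson_odd_general {n : ℕ} (hn : ((2 * n + 1).factorial : K) ≠ 0) (a c : K)
    (h₁ : ∀ k : ℕ, k ≤ 2 * n → (a + 1) / 2 + k ≠ 0)
    (h₂ : ∀ k : ℕ, k ≤ 2 * n → 2 * c + k ≠ 0) :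
    ∑ k ∈ range (2 * n + 2),
      ((ascPochhammer K k).eval (-(2 * n : K) - 1) * (ascPochhammer K k).eval (a + 2 * n + 1) *
          (ascPochhammer K k).eval c) /
        ((ascPochhammer K k).eval ((a + 1) / 2) * (ascPochhammer K k).eval (2 * c) *
          (k.factorial : K)) = 0 := by
  have two_ne_zero : (2 : K) ≠ 0 := left_ne_zero_of_mul (by simpa using h₂ 0 (Nat.zero_le _))
  have upper₁ : -(2 * n : K) - 1 = -((2 * n + 1 : ℕ) : K) := by push_cast; ring
  have upper₂ : a + 2 * n + 1 = 2 * ((a + 1) / 2) + (2 * n + 1 : ℕ) - 1 := by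
    rw [mul_div_cancel₀ _ two_ne_zero]; push_cast; ring
  rw [upper₁, upper₂, sum_ascPochhammer_eq_binomialTransform hn]
  have self_dual (k : ℕ) (hk : k ≤ 2 * n + 1) :
      binomialTransform (ascPochhammerRatio c (2 * c)) k = ascPochhammerRatio c (2 * c) k := by
    rw [binomialTransform_ascPochhammerRatio c
      (ascPochhammer_eval_ne_zero fun i hi => h₂ i (by lia)), two_mul, add_sub_cancel_right]
  have reflection := binomialTransform_ascPochhammerRatio_mul_of_eq_self
    (ascPochhammer_eval_ne_zero fun k (hk : k < 2 * n + 1) => h₁ k (by lia)) self_dual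
  rw [Odd.neg_one_pow ⟨n, rfl⟩, neg_one_mul, eq_neg_iff_add_eq_zero, ← two_mul] at reflection
  exact (mul_eq_zero.mp reflection).resolve_left two_ne_zero

end AscPochhammerRatio

/-- **Watson's classical summation theorem** for a terminating hypergeometric
`₃F₂`-series of odd order: the sum vanishes. -/
theorem watson_odd (n : ℕ) (a c : ℂ)
    (h₁ : ∀ k : ℕ, k ≤ 2 * n → (a + 1) / 2 + k ≠ 0)
    (h₂ : ∀ k : ℕ, k ≤ 2 * n → 2 * c + k ≠ 0) :
    ∑ k ∈ Finset.range (2 * n + 2),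
      (poch (-(2 * n : ℂ) - 1) k * poch (a + 2 * n + 1) k * poch c k) /
        (poch ((a + 1) / 2) k * poch (2 * c) k * (Nat.factorial k : ℂ)) = 0 :=
  watson_odd_general (Nat.cast_ne_zero.mpr (Nat.factorial_ne_zero _)) a c h₁ h₂
end
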